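/- For all 1 ≤ i ≤ j ≤ H and every s₀ ∈ S, |V_{i:j}(s₀) − Ṽ_{i:j}(s₀)| ≤ Σ_{t=i}^{j−1} Σ_{s∈S} |((P_t − P̃_t) Ṽ_{t+1:j})(s)| · (P_{i:t−1} 𝟙_{{s}})(s₀), where 𝟙_{{s}} : S → ℝ is the indicator function of the singleton {s}. -/

import Mathlib

open Finset

/-- The operator `(P_t f)(s) = ∑_{s'} p_t(s,s') f(s')` induced by transition matrices `p`. -/
noncomputable def Pop {S : Type*} [Fintype S] (p : ℕ → S → S → ℝ) (t : ℕ) (f : S → ℝ) (s : S) : ℝ :=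
  ∑ s', p t s s' * f s'

/-- The multi-step operator `P_{i:j} = P_i P_{i+1} ⋯ P_j` (identity when `j < i`). -/
noncomputable def PC {S : Type*} [Fintype S] (p : ℕ → S → S → ℝ) (i j : ℕ) (f : S → ℝ) : S → ℝ :=
  (List.range' i (j + 1 - i)).foldr (fun t g => Pop p t g) f

/-- The value function: `V_{j:j} = r_j`, `V_{i:j} = r_i + P_i V_{i+1:j}` for `i < j`. -/
noncomputable def Vf {S : Type*} [Fintype S] (p : ℕ → S → S → ℝ) (r : ℕ → S → ℝ)
    (i j : ℕ) : S → ℝ :=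
  if _h : i < j then fun s => r i s + Pop p i (Vf p r (i + 1) j) s
  else r j
termination_by j - i
decreasing_by omega

/-!
Replacing `p` by `q` one step at a time turns `V_{i:j} - Ṽ_{i:j}` into the exact telescoping sum
`∑_{i ≤ t < j} P_{i:t-1} (P_t - P̃_t) Ṽ_{t+1:j}`. Since the operators `P_{i:t-1}` are products of
entrywise nonnegative matrices, absolute values can be moved inside them, and the `(s₀, s)` entry of
`P_{i:t-1}` is its value on `𝟙_{s}` at `s₀`.
-/

section TransitionMatrix

open Matrix

theorem abs_mulVec_le_of_nonneg {m n R : Type*} [Fintype n] [Ring R] [LinearOrder R]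
    [IsOrderedRing R] {A : Matrix m n R} (hA : ∀ a b, 0 ≤ A a b) (v : n → R) (a : m) :
    |(A *ᵥ v) a| ≤ (A *ᵥ |v|) a :=
  calc |∑ b, A a b * v b| ≤ ∑ b, |A a b * v b| := Finset.abs_sum_le_sum_abs _ _
    _ = ∑ b, A a b * |v b| := by simp only [abs_mul, abs_of_nonneg (hA a _)]

variable {S R : Type*} [Fintype S] [DecidableEq S] [Semiring R]

/-- The transition matrix `A_i A_{i+1} ⋯ A_{t-1}` from time `i` to time `t`. The right end is
exclusive, so the empty product occurs at `t = i` (and also for `t < i`) and no truncated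
predecessor `t - 1` is involved. -/
def transitionMatrix (A : ℕ → Matrix S S R) (i t : ℕ) : Matrix S S R :=
  ((List.range' i (t - i)).map A).prod

theorem transitionMatrix_self (A : ℕ → Matrix S S R) (i : ℕ) : transitionMatrix A i i = 1 := by
  simp [transitionMatrix]

theorem transitionMatrix_of_lt (A : ℕ → Matrix S S R) {i t : ℕ} (h : i < t) :
    transitionMatrix A i t = A i * transitionMatrix A (i + 1) t := by
  rw [transitionMatrix, transitionMatrix, show t - i = t - (i + 1) + 1 by lia, List.range'_succ,
    List.map_cons, List.prod_cons]

theorem transitionMatrix_nonneg [PartialOrder R] [IsOrderedRing R] {A : ℕ → Matrix S S R}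
    {i t : ℕ} (hA : ∀ k ∈ Ico i t, ∀ s s', 0 ≤ A k s s') :
    ∀ s s', 0 ≤ transitionMatrix A i t s s' := by
  refine List.prod_induction (fun B : Matrix S S R => ∀ s s', 0 ≤ B s s') ?mul ?one ?factor
  case mul =>
    exact fun B C hB hC s s' => sum_nonneg fun x _ => mul_nonneg (hB s x) (hC x s')
  case one =>
    intro s s'
    rw [one_apply]
    split_ifs <;> simp
  case factor =>
    rintro _ hB
    obtain ⟨k, hk, rfl⟩ := List.mem_map.mp hB
    exact hA k (by grind)

end TransitionMatrix

section ValueFunction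

open Matrix

variable {S : Type*} [Fintype S]

theorem Pop_eq_mulVec (p : ℕ → S → S → ℝ) (t : ℕ) (f : S → ℝ) :
    Pop p t f = of (p t) *ᵥ f :=
  rfl

theorem PC_eq_transitionMatrix_mulVec [DecidableEq S] (p : ℕ → S → S → ℝ) (i : ℕ) {t : ℕ}
    (ht : 1 ≤ t) (f : S → ℝ) :
    PC p i (t - 1) f = transitionMatrix (fun k => of (p k)) i t *ᵥ f := by
  rw [PC, transitionMatrix, Nat.sub_add_cancel ht]
  induction List.range' i (t - i) with
  | nil => simp
  | cons k l ih =>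
    rw [List.foldr_cons, ih, Pop_eq_mulVec, List.map_cons, List.prod_cons, mulVec_mulVec]

theorem PC_indicator_eq_transitionMatrix [DecidableEq S] (p : ℕ → S → S → ℝ) (i : ℕ) {t : ℕ}
    (ht : 1 ≤ t) (s₀ s : S) :
    PC p i (t - 1) (fun x => if x = s then 1 else 0) s₀ =
      transitionMatrix (fun k => of (p k)) i t s₀ s := by
  simp [PC_eq_transitionMatrix_mulVec p i ht, mulVec, dotProduct]

theorem Vf_self (p : ℕ → S → S → ℝ) (r : ℕ → S → ℝ) (j : ℕ) : Vf p r j j = r j := by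
  rw [Vf, dif_neg (lt_irrefl j)]

theorem Vf_of_lt (p : ℕ → S → S → ℝ) (r : ℕ → S → ℝ) {i j : ℕ} (h : i < j) :
    Vf p r i j = r i + Pop p i (Vf p r (i + 1) j) := by
  rw [Vf, dif_pos h]
  rfl

theorem Vf_sub_Vf_of_lt (p q : ℕ → S → S → ℝ) (r : ℕ → S → ℝ) {i j : ℕ} (h : i < j) :
    Vf p r i j - Vf q r i j =
      (Pop p i (Vf q r (i + 1) j) - Pop q i (Vf q r (i + 1) j)) +
        Pop p i (Vf p r (i + 1) j - Vf q r (i + 1) j) := by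
  rw [Vf_of_lt p r h, Vf_of_lt q r h]
  simp only [Pop_eq_mulVec, mulVec_sub]
  abel

theorem Vf_sub_Vf_eq_sum [DecidableEq S] (p q : ℕ → S → S → ℝ) (r : ℕ → S → ℝ) {i j : ℕ}
    (hij : i ≤ j) :
    Vf p r i j - Vf q r i j =
      ∑ t ∈ Ico i j, transitionMatrix (fun k => of (p k)) i t *ᵥ
        (Pop p t (Vf q r (t + 1) j) - Pop q t (Vf q r (t + 1) j)) := by
  induction hij using Nat.decreasingInduction with
  | self => simp [Vf_self]
  | of_succ k hk ih =>
    rw [Vf_sub_Vf_of_lt p q r hk, ih, sum_eq_sum_Ico_succ_bot hk, transitionMatrix_self,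
      one_mulVec, Pop_eq_mulVec p k (∑ t ∈ _, _), mulVec_sum]
    congr 1
    refine sum_congr rfl fun t ht => ?_
    rw [mulVec_mulVec, transitionMatrix_of_lt _ (mem_Ico.mp ht).1]

theorem value_difference_bound_general [DecidableEq S] (r : ℕ → S → ℝ) (p q : ℕ → S → S → ℝ)
    {i j : ℕ} (hp : ∀ t ∈ Ico i j, ∀ s s', 0 ≤ p t s s') (hi : 1 ≤ i) (hij : i ≤ j) (s₀ : S) :
    |Vf p r i j s₀ - Vf q r i j s₀| ≤
      ∑ t ∈ Ico i j, ∑ s : S,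
        |Pop p t (Vf q r (t + 1) j) s - Pop q t (Vf q r (t + 1) j) s| *
          PC p i (t - 1) (fun x => if x = s then (1 : ℝ) else 0) s₀ := by
  rw [← Pi.sub_apply, Vf_sub_Vf_eq_sum p q r hij, Finset.sum_apply]
  refine (abs_sum_le_sum_abs _ _).trans (sum_le_sum fun t ht => ?_)
  obtain ⟨hit, htj⟩ := mem_Ico.mp ht
  have hT : ∀ s s', 0 ≤ transitionMatrix (fun k => of (p k)) i t s s' :=
    transitionMatrix_nonneg fun k hk => hp k (Ico_subset_Ico_right htj.le hk)
  refine (abs_mulVec_le_of_nonneg hT _ s₀).trans_eq (sum_congr rfl fun s _ => ?_)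
  rw [PC_indicator_eq_transitionMatrix p i (hi.trans hit), mul_comm,
    Pi.abs_apply, Pi.sub_apply]

end ValueFunction

/-- The value-function difference is bounded by propagated one-step model errors. -/
theorem value_difference_bound
    {S : Type*} [Fintype S] [DecidableEq S] [Nonempty S] (H : ℕ) (hH : 1 ≤ H)
    (r : ℕ → S → ℝ) (p q : ℕ → S → S → ℝ)
    (hp_nonneg : ∀ t, 1 ≤ t → t ≤ H → ∀ s s', 0 ≤ p t s s')
    (hp_sum : ∀ t, 1 ≤ t → t ≤ H → ∀ s, ∑ s', p t s s' = 1)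
    (hq_nonneg : ∀ t, 1 ≤ t → t ≤ H → ∀ s s', 0 ≤ q t s s')
    (hq_sum : ∀ t, 1 ≤ t → t ≤ H → ∀ s, ∑ s', q t s s' = 1)
    (i j : ℕ) (hi : 1 ≤ i) (hij : i ≤ j) (hj : j ≤ H) (s₀ : S) :
    |Vf p r i j s₀ - Vf q r i j s₀| ≤
      ∑ t ∈ Finset.Ico i j, ∑ s : S,
        |Pop p t (Vf q r (t + 1) j) s - Pop q t (Vf q r (t + 1) j) s| *
          PC p i (t - 1) (fun x => if x = s then (1 : ℝ) else 0) s₀ := by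
  exact value_difference_bound_general r p q (fun t ht => hp_nonneg t (hi.trans (mem_Ico.mp ht).1)
    ((mem_Ico.mp ht).2.le.trans hj)) hi hij s₀
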